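/- Let u ∈ W and γ ∈ R^+ with ℓ(us_γ) = ℓ(u) + 1. Then for every 1 ≤ i ≤ n with ⟨χ_i, γ^∨⟩ ≠ 0, one has gr(us_γ) ≤ gr(u) + e_m in the lexicographic order on Z^{r+1}, where m is the unique index with α_i ∈ Δ_m \ Δ_{m−1}. -/

import Mathlib

/-!
The length of `w ∈ W` is its number of inversions (`len_eq`), and the length of the `k`-th
factor of the decomposition of `w` is the number of inversions of `w` lying in
`R_{Δ_k} \ R_{Δ_{k-1}}` (`len_factor`).  Call the least `k` with `β ∈ R_{Δ_k}` the level
of a root `β`; so `gr` counts inversions level by level, and the components of `gr(w)` sum to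
`ℓ(w)` (`sum_len`).

Let `u < u s_γ` be a cover.  Pairing each inversion `δ` of `s_γ` with `-s_γ δ` expresses
`ℓ(u s_γ) - ℓ(u)` as a sum of terms of constant sign (`len_diff`), in which the term of `γ`
contributes `1`.  As the sum is `1`, all other terms vanish: for every inversion `δ ≠ γ` of
`s_γ`, the root `δ` is an inversion of `u s_γ` iff it is one of `u` (`sgn_cover`).

* At a level below that of `γ`, every inversion `δ` of `u s_γ` is one of `u`
  (`inv_cover_subset`): either `s_γ δ < 0` and the previous remark applies, or
  `⟨δ, γ^∨⟩ ≤ 0`, and then `u s_γ δ` is `u δ` plus a nonnegative multiple of `u γ > 0`.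
* At a level above that of `γ`, `s_γ` permutes the positive roots, so the number of
  inversions does not change (`card_above`).

Since the total increases by `1`, `gr(u s_γ) ≤ gr(u) + e_p` for the level `p` of `γ`.  The
coroot `γ^∨` is supported on the support of `γ` (`coord_ne_of_cor`), so `m ≤ p` and
`e_p ≤ e_m`.
-/


open scoped BigOperators

/-- A reduced crystallographic root system with a fixed base `α_1, …, α_n` of simple
roots, bundled with its Weyl group `W`.  A root `γ` is recorded by its integer
coordinate vector in the basis of simple roots (so the `i`-th simple root is
`Pi.single i 1`), and `cor γ` is the coordinate vector of the coroot `γ^∨` in the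
basis of simple coroots (hence `cor γ i = ⟨χ_i, γ^∨⟩` for the fundamental weights
`χ_i`).  `A i j = ⟨α_i, α_j^∨⟩` is the Cartan matrix, `σ γ` is the reflection `s_γ`
and `act` is the action of the Weyl group on the root lattice. -/
structure RootSystemData (n : ℕ) where
  A : Fin n → Fin n → ℤ
  R : Finset (Fin n → ℤ)
  cor : (Fin n → ℤ) → (Fin n → ℤ)
  W : Type
  [grp : Group W]
  σ : (Fin n → ℤ) → W
  act : W → (Fin n → ℤ) → (Fin n → ℤ)
  simple_mem : ∀ i : Fin n, (Pi.single i 1 : Fin n → ℤ) ∈ R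
  root_ne_zero : ∀ γ ∈ R, γ ≠ 0
  neg_mem : ∀ γ ∈ R, -γ ∈ R
  pos_or_neg : ∀ γ ∈ R, (∀ i, 0 ≤ γ i) ∨ (∀ i, γ i ≤ 0)
  reduced : ∀ γ ∈ R, ∀ k : ℤ, k • γ ∈ R → k = 1 ∨ k = -1
  cor_simple : ∀ i : Fin n, cor (Pi.single i 1) = Pi.single i 1
  cor_neg : ∀ γ ∈ R, cor (-γ) = -(cor γ)
  pair_self : ∀ γ ∈ R, (∑ i, ∑ j, γ i * A i j * cor γ j) = 2
  act_one : ∀ x, act 1 x = x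
  act_mul : ∀ w w' x, act (w * w') x = act w (act w' x)
  act_refl : ∀ γ ∈ R, ∀ x, act (σ γ) x = x - (∑ i, ∑ j, x i * A i j * cor γ j) • γ
  act_mem : ∀ (w : W), ∀ γ ∈ R, act w γ ∈ R
  cor_refl : ∀ γ ∈ R, ∀ β ∈ R,
    cor (act (σ γ) β) = cor β - (∑ i, ∑ j, γ i * A i j * cor β j) • cor γ
  refl_sq : ∀ γ ∈ R, σ γ * σ γ = 1
  refl_act : ∀ (w : W), ∀ γ ∈ R, σ (act w γ) = w * σ γ * w⁻¹
  act_faithful : ∀ w w' : W, (∀ γ ∈ R, act w γ = act w' γ) → w = w'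
  generated : ∀ w : W, ∃ l : List (Fin n), w = (l.map fun i => σ (Pi.single i 1)).prod

namespace RootSystemData

instance {n : ℕ} (c : RootSystemData n) : Group c.W := c.grp

/-- the pairing `⟨x, λ⟩` between an element `x` of the root lattice (coordinates in
the basis of simple roots) and an element `λ` of the coroot lattice (coordinates in
the basis of simple coroots) -/
def pair {n : ℕ} (c : RootSystemData n) (x lam : Fin n → ℤ) : ℤ :=
  ∑ i, ∑ j, x i * c.A i j * lam j

/-- the `i`-th simple root -/
def sroot {n : ℕ} (_c : RootSystemData n) (i : Fin n) : Fin n → ℤ := Pi.single i 1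

/-- the simple reflection `s_i` -/
def s {n : ℕ} (c : RootSystemData n) (i : Fin n) : c.W := c.σ (c.sroot i)

/-- `s_{α_{t+1}}` for a `0`-based natural number index `t` (`= 1` when out of range) -/
def sN {n : ℕ} (c : RootSystemData n) (t : ℕ) : c.W := if h : t < n then c.s ⟨t, h⟩ else 1

/-- `⟨2ρ, λ⟩ = Σ_{β ∈ R^+} ⟨β, λ⟩`, where `ρ` is the half-sum of the positive roots -/
def pairTwoRho {n : ℕ} (c : RootSystemData n) (lam : Fin n → ℤ) : ℤ :=
  ∑ β ∈ c.R, if ∀ i, 0 ≤ β i then c.pair β lam else 0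

/-- the length of `w ∈ W` with respect to the simple reflections -/
noncomputable def len {n : ℕ} (c : RootSystemData n) (w : c.W) : ℕ :=
  sInf {k | ∃ l : List (Fin n), l.length = k ∧ (l.map c.s).prod = w}

/-- the parabolic subgroup `W_S` generated by the simple reflections indexed by `S` -/
def Wsub {n : ℕ} (c : RootSystemData n) (S : Finset (Fin n)) : Subgroup c.W :=
  Subgroup.closure (c.s '' ↑S)

/-- `w ∈ W_T^S`: `w ∈ W_T` and `w` has minimal length in the coset `w W_S` -/
def MinRep {n : ℕ} (c : RootSystemData n) (T S : Finset (Fin n)) (w : c.W) : Prop :=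
  w ∈ c.Wsub T ∧ ∀ u ∈ c.Wsub S, c.len w ≤ c.len (w * u)

/-- `w` is the longest element of `W_S` -/
def IsLongest {n : ℕ} (c : RootSystemData n) (S : Finset (Fin n)) (w : c.W) : Prop :=
  w ∈ c.Wsub S ∧ ∀ v ∈ c.Wsub S, c.len v ≤ c.len w

end RootSystemData

/-- the support of `γ` is contained in `S`, i.e. `γ` lies in the span of
`{α_i : i ∈ S}` (for a root `γ`, membership in `R_S`) -/
def suppIn {n : ℕ} (S : Finset (Fin n)) (γ : Fin n → ℤ) : Prop :=
  ∀ i, i ∉ S → γ i = 0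

/-- `Δ_j` for `0 ≤ j ≤ r+1`: the index set of the first `j` simple roots for `j ≤ r`,
and all of `Δ` for `j = r+1`.  (Indices of simple roots are `0`-based, so
`α_1, …, α_j` correspond to the indices `0, …, j-1`.) -/
def deltaSet (n r j : ℕ) : Finset (Fin n) :=
  if j = r + 1 then Finset.univ else Finset.univ.filter fun i => (i : ℕ) < j

namespace RootSystemData

/-- `v 0, …, v r` (standing for `v_1, …, v_{r+1}`) is the decomposition of `w`
associated to `(Δ_P, Υ)`:  each `v_i ∈ W_{Δ_i}^{Δ_{i-1}}` and `w = v_{r+1} v_r ⋯ v_1`. -/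
def IsDecomp {n : ℕ} (c : RootSystemData n) (r : ℕ) (w : c.W)
    (v : Fin (r + 1) → c.W) : Prop :=
  (∀ k : Fin (r + 1), c.MinRep (deltaSet n r ((k : ℕ) + 1)) (deltaSet n r (k : ℕ)) (v k)) ∧
    w = (List.ofFn v).reverse.prod

/-- the first `m` simple roots `α_1, …, α_m` form a path of type `A_m`:
`⟨α_i, α_j^∨⟩ = -1` if `|i-j| = 1` and `⟨α_i, α_j^∨⟩ = 0` if `|i-j| ≥ 2`. -/
def PathA {n : ℕ} (c : RootSystemData n) (m : ℕ) : Prop :=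
  ∀ i j : Fin n, (i : ℕ) < m → (j : ℕ) < m →
    (((i : ℕ) + 1 = (j : ℕ) ∨ (j : ℕ) + 1 = (i : ℕ)) → c.A i j = -1) ∧
    ((i : ℕ) + 2 ≤ (j : ℕ) ∨ (j : ℕ) + 2 ≤ (i : ℕ) → c.A i j = 0)

/-- `u_{[k,m]} = s_k s_{k+1} ⋯ s_m` (`1`-based indices; `u_{[k,m]} = 1` for `k > m`) -/
def uu {n : ℕ} (c : RootSystemData n) (k m : ℕ) : c.W :=
  ((List.range' k (m + 1 - k)).map fun t => c.sN (t - 1)).prod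

/-- `u_i^{(m)} = s_{m-i+1} s_{m-i+2} ⋯ s_m` -/
def uElt {n : ℕ} (c : RootSystemData n) (i m : ℕ) : c.W := c.uu (m - i + 1) m

end RootSystemData

/-- strict lexicographic order on `Fin m → ℤ` -/
def lexLT {m : ℕ} (x y : Fin m → ℤ) : Prop :=
  ∃ j, x j < y j ∧ ∀ k, k < j → x k = y k

/-- lexicographic order on `Fin m → ℤ` -/
def lexLE {m : ℕ} (x y : Fin m → ℤ) : Prop := x = y ∨ lexLT x y

/-- the grading `gr(q_{α_{j+1}^∨}) ∈ ℤ^{r+1}` (for the `0`-based index `j < r`), when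
`Δ_P` is of type `A_r`: in `1`-based terms, `gr(q_{α_1^∨}) = 2·e_1` and
`gr(q_{α_j^∨}) = (1-j)·e_{j-1} + (1+j)·e_j` for `2 ≤ j ≤ r`. -/
def grQ (r j : ℕ) : Fin (r + 1) → ℤ := fun k =>
  (if (k : ℕ) = j then (j : ℤ) + 2 else 0) + (if (k : ℕ) + 1 = j then -(j : ℤ) else 0)

/-- the grading `gr(q_λ)` for `λ ∈ Q_P^∨` (coordinates in simple coroots), extended
additively from the `gr(q_{α_j^∨})`, when `Δ_P` is of type `A_r` -/
def grQlam (n r : ℕ) (lam : Fin n → ℤ) : Fin (r + 1) → ℤ :=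
  fun k => ∑ j, lam j * grQ r (j : ℕ) k

namespace RootSystemData

variable {n : ℕ} (c : RootSystemData n)

/-! ### The action on the root lattice and signs of roots -/

/-- All coordinates are nonnegative; for a root this says that it is a positive root. -/
def Pos (x : Fin n → ℤ) : Prop := ∀ i, 0 ≤ x i

theorem act_refl_pair {γ : Fin n → ℤ} (hγ : γ ∈ c.R) (x : Fin n → ℤ) :
    c.act (c.σ γ) x = x - c.pair x (c.cor γ) • γ := c.act_refl γ hγ x

theorem pair_add (x y l : Fin n → ℤ) : c.pair (x + y) l = c.pair x l + c.pair y l := by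
  simp [pair, add_mul, Finset.sum_add_distrib]

theorem pair_smul (a : ℤ) (x l : Fin n → ℤ) : c.pair (a • x) l = a * c.pair x l := by
  simp [pair, Finset.mul_sum, mul_assoc]

theorem sroot_mem (i : Fin n) : c.sroot i ∈ c.R := c.simple_mem i

theorem sroot_pos (i : Fin n) : Pos (c.sroot i) := by
  intro k
  by_cases h : k = i
  · subst h; simp [sroot]
  · simp [sroot, h]

theorem exists_word (w : c.W) : ∃ l : List (Fin n), (l.map c.s).prod = w := by
  obtain ⟨l, hl⟩ := c.generated w
  exact ⟨l, hl.symm⟩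

theorem act_linear (w : c.W) : (∀ x y, c.act w (x + y) = c.act w x + c.act w y) ∧
    ∀ (a : ℤ) x, c.act w (a • x) = a • c.act w x := by
  obtain ⟨l, rfl⟩ := c.exists_word w
  induction l with
  | nil => simp [c.act_one]
  | cons i t ih =>
    simp only [List.map_cons, List.prod_cons, c.act_mul, ih.1, ih.2]
    constructor
    · intro x y
      simp only [s, c.act_refl_pair (c.sroot_mem i), pair_add]
      module
    · intro a x
      simp only [s, c.act_refl_pair (c.sroot_mem i), pair_smul]
      module

/-- The action of a Weyl group element on the root lattice, as a linear map. -/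
def actL (w : c.W) : (Fin n → ℤ) →ₗ[ℤ] (Fin n → ℤ) where
  toFun := c.act w
  map_add' := (c.act_linear w).1
  map_smul' := (c.act_linear w).2

theorem act_neg (w : c.W) (x : Fin n → ℤ) : c.act w (-x) = -c.act w x :=
  map_neg (c.actL w) x

theorem act_sum (w : c.W) (x : Fin n → ℤ) :
    c.act w x = ∑ i, x i • c.act w (c.sroot i) := by
  have h : x = ∑ i, x i • c.sroot i := by
    ext k
    simp [sroot, Finset.sum_apply, Pi.single_apply]
  conv_lhs => rw [h]
  refine (map_sum (c.actL w) (fun i => x i • c.sroot i) Finset.univ).trans ?_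
  exact Finset.sum_congr rfl fun i _ => (c.act_linear w).2 _ _

theorem act_inv_act (w : c.W) (x : Fin n → ℤ) : c.act w⁻¹ (c.act w x) = x := by
  rw [← c.act_mul, inv_mul_cancel, c.act_one]

theorem act_act_inv (w : c.W) (x : Fin n → ℤ) : c.act w (c.act w⁻¹ x) = x := by
  rw [← c.act_mul, mul_inv_cancel, c.act_one]

theorem refl_refl {γ : Fin n → ℤ} (hγ : γ ∈ c.R) (x : Fin n → ℤ) :
    c.act (c.σ γ) (c.act (c.σ γ) x) = x := by
  rw [← c.act_mul, c.refl_sq γ hγ, c.act_one]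

theorem refl_self {γ : Fin n → ℤ} (hγ : γ ∈ c.R) : c.act (c.σ γ) γ = -γ := by
  rw [c.act_refl_pair hγ]
  have : c.pair γ (c.cor γ) = 2 := c.pair_self γ hγ
  rw [this]; module

theorem s_sroot (i : Fin n) : c.act (c.s i) (c.sroot i) = -c.sroot i :=
  c.refl_self (c.sroot_mem i)

theorem s_mul_s (i : Fin n) : c.s i * c.s i = 1 := c.refl_sq _ (c.sroot_mem i)

theorem s_s (i : Fin n) (x : Fin n → ℤ) : c.act (c.s i) (c.act (c.s i) x) = x :=
  c.refl_refl (c.sroot_mem i) x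

theorem s_apply_of_ne (i k : Fin n) (hk : k ≠ i) (x : Fin n → ℤ) :
    c.act (c.s i) x k = x k := by
  rw [s, c.act_refl_pair (c.sroot_mem i)]
  simp [sroot, hk]

theorem not_pos_iff {β : Fin n → ℤ} (hβ : β ∈ c.R) : ¬ Pos β ↔ Pos (-β) := by
  constructor
  · intro h
    rcases c.pos_or_neg β hβ with h' | h'
    · exact absurd h' h
    · intro i; simpa using h' i
  · intro h h'
    apply c.root_ne_zero β hβ
    ext i
    have h1 := h i
    have h2 := h' i
    simp only [Pi.neg_apply, Pi.zero_apply] at *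
    omega

theorem pos_of_coord {β : Fin n → ℤ} (hβ : β ∈ c.R) (i : Fin n) (hi : 0 < β i) : Pos β := by
  rcases c.pos_or_neg β hβ with h | h
  · exact h
  · have := h i; omega

theorem exists_coord {β : Fin n → ℤ} (hβ : β ∈ c.R) : ∃ i, β i ≠ 0 := by
  by_contra! h
  exact c.root_ne_zero β hβ (funext h)

/-- A simple reflection permutes the positive roots other than its own simple root. -/
theorem s_pos {β : Fin n → ℤ} (hβ : β ∈ c.R) (hp : Pos β) (i : Fin n) (hne : β ≠ c.sroot i) :
    Pos (c.act (c.s i) β) := by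
  by_cases h : ∃ k, k ≠ i ∧ β k ≠ 0
  · obtain ⟨k, hk, hk0⟩ := h
    apply c.pos_of_coord (c.act_mem _ _ hβ) k
    rw [c.s_apply_of_ne i k hk]
    have := hp k
    omega
  · push Not at h
    exfalso
    have e : β = β i • c.sroot i := by
      ext k
      by_cases hk : k = i
      · subst hk; simp [sroot]
      · simp [sroot, hk, h k hk]
    rcases c.reduced _ (c.sroot_mem i) (β i) (e ▸ hβ) with h1 | h1
    · apply hne; rw [e, h1, one_smul]
    · have := hp i; omega

theorem pos_act_of_simple (w : c.W) (S : Finset (Fin n))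
    (h : ∀ i ∈ S, Pos (c.act w (c.sroot i))) {x : Fin n → ℤ} (hp : Pos x)
    (hx : suppIn S x) : Pos (c.act w x) := by
  intro k
  rw [c.act_sum, Finset.sum_apply]
  apply Finset.sum_nonneg
  intro i _
  by_cases hi : i ∈ S
  · exact mul_nonneg (hp i) (h i hi k)
  · simp [hx i hi]

/-! ### Length and inversions -/

open Classical in
/-- The set of inversions of `w`: positive roots sent to negative roots. -/
noncomputable def inv (w : c.W) : Finset (Fin n → ℤ) :=
  c.R.filter fun β => Pos β ∧ ¬ Pos (c.act w β)

theorem mem_inv {w : c.W} {β : Fin n → ℤ} :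
    β ∈ c.inv w ↔ β ∈ c.R ∧ Pos β ∧ ¬ Pos (c.act w β) := by
  classical
  simp [inv]

theorem inv_mul_s (w : c.W) (i : Fin n) (h : Pos (c.act w (c.sroot i))) :
    (c.inv (w * c.s i)).card = (c.inv w).card + 1 := by
  classical
  have hmem : c.sroot i ∈ c.inv (w * c.s i) := by
    refine c.mem_inv.2 ⟨c.sroot_mem i, c.sroot_pos i, ?_⟩
    rw [c.act_mul, c.s_sroot, c.act_neg, c.not_pos_iff (c.neg_mem _ (c.act_mem _ _ (c.sroot_mem i))),
      neg_neg]
    exact h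
  rw [← Finset.card_erase_add_one hmem]
  congr 1
  refine Finset.card_nbij' (c.act (c.s i)) (c.act (c.s i)) ?_ ?_ ?_ ?_
  · intro β hβ
    simp only [Finset.coe_erase, Set.mem_sdiff, Finset.mem_coe, Set.mem_singleton_iff, mem_inv] at *
    obtain ⟨⟨h1, h2, h3⟩, h4⟩ := hβ
    exact ⟨c.act_mem _ _ h1, c.s_pos h1 h2 i h4, by rwa [← c.act_mul]⟩
  · intro β hβ
    simp only [Finset.coe_erase, Set.mem_sdiff, Finset.mem_coe, Set.mem_singleton_iff, mem_inv] at *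
    obtain ⟨h1, h2, h3⟩ := hβ
    have h4 : β ≠ c.sroot i := by rintro rfl; exact h3 h
    refine ⟨⟨c.act_mem _ _ h1, c.s_pos h1 h2 i h4, by rwa [c.act_mul, c.s_s]⟩, ?_⟩
    intro h5
    have h6 : β = -c.sroot i := by rw [← c.s_s i β, h5, c.s_sroot]
    rw [h6, ← c.not_pos_iff (c.sroot_mem i)] at h2
    exact h2 (c.sroot_pos i)
  · intro β _; exact c.s_s i β
  · intro β _; exact c.s_s i β

theorem inv_mul_s' (w : c.W) (i : Fin n) (h : ¬ Pos (c.act w (c.sroot i))) :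
    (c.inv (w * c.s i)).card + 1 = (c.inv w).card := by
  have := c.inv_mul_s (w * c.s i) i (by
    rw [c.act_mul, c.s_sroot, c.act_neg, ← c.not_pos_iff (c.act_mem _ _ (c.sroot_mem i))]
    exact h)
  rw [mul_assoc, c.s_mul_s, mul_one] at this
  exact this.symm

/-- The exchange condition. -/
theorem exchange (l : List (Fin n)) (i : Fin n)
    (h : ¬ Pos (c.act (l.map c.s).prod (c.sroot i))) :
    ∃ l' : List (Fin n), l'.length + 1 = l.length ∧
      (l'.map c.s).prod = (l.map c.s).prod * c.s i := by
  induction l with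
  | nil => exact absurd (by simpa [c.act_one] using c.sroot_pos i) h
  | cons j t ih =>
    by_cases ht : Pos (c.act (t.map c.s).prod (c.sroot i))
    · -- the sign changes at the letter `j`, so the tail of the word sends `α_i` to `α_j`
      have e : c.act (t.map c.s).prod (c.sroot i) = c.sroot j := by
        by_contra hne
        apply h
        rw [List.map_cons, List.prod_cons, c.act_mul]
        exact c.s_pos (c.act_mem _ _ (c.sroot_mem i)) ht j hne
      have e2 : c.s j = (t.map c.s).prod * c.s i * (t.map c.s).prod⁻¹ := by
        rw [s, ← e, c.refl_act _ _ (c.sroot_mem i)]; rfl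
      refine ⟨t, by simp, ?_⟩
      rw [List.map_cons, List.prod_cons, e2, inv_mul_cancel_right, mul_assoc, c.s_mul_s, mul_one]
    · obtain ⟨l', h1, h2⟩ := ih ht
      exact ⟨j :: l', by simp [h1], by simp [h2, mul_assoc]⟩

theorem len_le (l : List (Fin n)) : c.len (l.map c.s).prod ≤ l.length :=
  Nat.sInf_le ⟨l, rfl, rfl⟩

theorem exists_reduced (w : c.W) :
    ∃ l : List (Fin n), l.length = c.len w ∧ (l.map c.s).prod = w := by
  obtain ⟨l, hl⟩ := c.exists_word w
  exact Nat.sInf_mem (s := {k | ∃ l : List (Fin n), l.length = k ∧ (l.map c.s).prod = w})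
    ⟨_, l, rfl, hl⟩

theorem inv_one : c.inv 1 = ∅ := by
  ext β
  simp only [mem_inv, c.act_one, Finset.notMem_empty, iff_false]
  tauto

/-- The length of `w` is its number of inversions. -/
theorem len_eq (w : c.W) : c.len w = (c.inv w).card := by
  induction hk : c.len w generalizing w with
  | zero =>
    obtain ⟨l, h1, h2⟩ := c.exists_reduced w
    rw [hk, List.length_eq_zero_iff] at h1
    subst h1
    simp only [List.map_nil, List.prod_nil] at h2
    rw [← h2, inv_one, Finset.card_empty]
  | succ k ih =>
    obtain ⟨l, h1, h2⟩ := c.exists_reduced w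
    rcases List.eq_nil_or_concat l with rfl | ⟨p, i, rfl⟩
    · simp [hk] at h1
    · have hw : w = (p.map c.s).prod * c.s i := by rw [← h2]; simp
      have hp : p.length = k := by simp [hk] at h1; exact h1
      have hpos : Pos (c.act (p.map c.s).prod (c.sroot i)) := by
        by_contra hn
        obtain ⟨l', h3, h4⟩ := c.exchange p i hn
        have := c.len_le l'
        rw [h4, ← hw] at this
        omega
      have hlen : c.len (p.map c.s).prod = k := by
        have := c.len_le p
        obtain ⟨q, h3, h4⟩ := c.exists_reduced (p.map c.s).prod
        have h5 := c.len_le (q ++ [i])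
        have h6 : ((q ++ [i]).map c.s).prod = w := by rw [hw, ← h4]; simp
        rw [h6] at h5
        simp at h5
        omega
      rw [hw, c.inv_mul_s _ _ hpos, ← ih _ hlen]

theorem eq_one_of_inv (w : c.W) (h : (c.inv w).card = 0) : w = 1 := by
  rw [← c.len_eq] at h
  obtain ⟨l, h1, h2⟩ := c.exists_reduced w
  rw [h, List.length_eq_zero_iff] at h1
  subst h1
  simpa using h2.symm

/-! ### The coroot is supported on the support of the root -/

/-- An element that only alters the coordinates in `S` is a product of the simple
reflections indexed by `S`. -/
theorem exists_word_of_fix (S : Finset (Fin n)) (w : c.W)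
    (h : ∀ x, ∀ k, k ∉ S → c.act w x k = x k) :
    ∃ l : List (Fin n), (∀ i ∈ l, i ∈ S) ∧ (l.map c.s).prod = w := by
  induction hk : (c.inv w).card generalizing w with
  | zero => exact ⟨[], by simp, by simp [c.eq_one_of_inv w hk]⟩
  | succ k ih =>
    obtain ⟨i, hi⟩ : ∃ i, ¬ Pos (c.act w (c.sroot i)) := by
      by_contra! hall
      have : (c.inv w).Nonempty := by rw [← Finset.card_pos]; omega
      obtain ⟨β, hβ⟩ := this
      obtain ⟨-, h2, h3⟩ := c.mem_inv.1 hβ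
      exact h3 (c.pos_act_of_simple w Finset.univ (fun i _ => hall i) h2
        (fun i hi => absurd (Finset.mem_univ i) hi))
    have hiS : i ∈ S := by
      by_contra hiS
      apply hi
      apply c.pos_of_coord (c.act_mem _ _ (c.sroot_mem i)) i
      rw [h _ i hiS]
      simp [sroot]
    have h1 := c.inv_mul_s' w i hi
    obtain ⟨l, hl, hl2⟩ := ih (w * c.s i) (by
      intro x k hk
      rw [c.act_mul, h _ k hk, c.s_apply_of_ne]
      rintro rfl
      exact hk hiS) (by omega)
    refine ⟨l ++ [i], ?_, ?_⟩
    · intro j hj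
      rcases List.mem_append.1 hj with hj | hj
      · exact hl j hj
      · rw [List.mem_singleton.1 hj]; exact hiS
    · simp [hl2, mul_assoc, c.s_mul_s]

/-- If a word in `S` makes a positive root negative, that root is conjugate under `W_S`
to a simple root of `S`, so its coroot is supported in `S`. -/
theorem suppIn_cor_of_word (S : Finset (Fin n)) (l : List (Fin n)) (hl : ∀ i ∈ l, i ∈ S)
    {γ : Fin n → ℤ} (hγ : γ ∈ c.R) (hp : Pos γ) (hn : ¬ Pos (c.act (l.map c.s).prod γ)) :
    suppIn S (c.cor γ) := by
  induction l using List.reverseRecOn generalizing γ with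
  | nil => exact absurd (by simpa [c.act_one] using hp) hn
  | append_singleton t j ih =>
    have hj : j ∈ S := hl j (by simp)
    by_cases e : γ = c.sroot j
    · intro k hk
      rw [e, sroot, c.cor_simple]
      have : k ≠ j := by rintro rfl; exact hk hj
      simp [this]
    · have h1 := ih (fun i hi => hl i (by simp [hi])) (c.act_mem (c.s j) γ hγ)
        (c.s_pos hγ hp j e) (by simpa [c.act_mul] using hn)
      intro k hk
      have h2 := c.cor_refl _ (c.sroot_mem j) _ (c.act_mem (c.s j) γ hγ)
      have h3 : c.act (c.σ (c.sroot j)) (c.act (c.s j) γ) = γ := c.s_s j γ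
      have hkj : k ≠ j := by rintro rfl; exact hk hj
      rw [h3] at h2
      rw [h2]
      simp [h1 k hk, sroot, c.cor_simple, hkj]

theorem coord_ne_of_cor {γ : Fin n → ℤ} (hγ : γ ∈ c.R) (hp : Pos γ) (i : Fin n)
    (hi : c.cor γ i ≠ 0) : γ i ≠ 0 := by
  intro h0
  obtain ⟨l, hl, hl2⟩ := c.exists_word_of_fix (Finset.univ.filter fun k => γ k ≠ 0) (c.σ γ) (by
    intro x k hk
    have : γ k = 0 := by simpa using hk
    rw [c.act_refl_pair hγ]
    simp [this])
  apply hi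
  refine c.suppIn_cor_of_word _ l hl hγ hp ?_ i (by simpa using h0)
  rw [hl2, c.refl_self hγ, c.not_pos_iff (c.neg_mem _ hγ), neg_neg]
  exact hp

/-! ### The grading counts inversions by level -/

theorem Wsub_apply (S : Finset (Fin n)) {y : c.W} (hy : y ∈ c.Wsub S) (x : Fin n → ℤ)
    (k : Fin n) (hk : k ∉ S) : c.act y x k = x k := by
  induction hy using Subgroup.closure_induction generalizing x with
  | mem z hz =>
    obtain ⟨i, hi, rfl⟩ := hz
    apply c.s_apply_of_ne
    rintro rfl
    exact hk hi
  | one => rw [c.act_one]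
  | mul a b _ _ ha hb => rw [c.act_mul, ha, hb]
  | inv a _ ha => rw [← ha (c.act a⁻¹ x), c.act_act_inv]

theorem Wsub_suppIn {S T : Finset (Fin n)} (hST : S ⊆ T) {y : c.W} (hy : y ∈ c.Wsub S)
    {x : Fin n → ℤ} (hx : suppIn T x) : suppIn T (c.act y x) := by
  intro k hk
  rw [c.Wsub_apply S hy x k (fun h => hk (hST h)), hx k hk]

theorem Wsub_pos {S : Finset (Fin n)} {y : c.W} (hy : y ∈ c.Wsub S) {β : Fin n → ℤ}
    (hβ : β ∈ c.R) (hp : Pos β) (hx : ¬ suppIn S β) : Pos (c.act y β) := by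
  unfold suppIn at hx
  push Not at hx
  obtain ⟨k, hk, hk0⟩ := hx
  apply c.pos_of_coord (c.act_mem _ _ hβ) k
  rw [c.Wsub_apply S hy β k hk]
  have := hp k
  omega

theorem MinRep_pos {T S : Finset (Fin n)} {x : c.W} (hx : c.MinRep T S x) {β : Fin n → ℤ}
    (hp : Pos β) (hs : suppIn S β) : Pos (c.act x β) := by
  refine c.pos_act_of_simple x S (fun i hi => ?_) hp hs
  by_contra hn
  have h1 := c.inv_mul_s' x i hn
  have h2 := hx.2 (c.s i) (Subgroup.subset_closure ⟨i, hi, rfl⟩)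
  rw [c.len_eq, c.len_eq] at h2
  omega

theorem mem_deltaSet {r k : ℕ} (hk : k ≤ r + 1) (i : Fin n) :
    i ∈ deltaSet n r k ↔ min (i : ℕ) r < k := by
  unfold deltaSet
  split_ifs with h
  · simp [h]
  · simp; omega

/-- The `0`-based level of a vector: the least `k` such that its support lies in
`Δ_{k+1}` (and `0` for the zero vector). -/
def lev (r : ℕ) (β : Fin n → ℤ) : ℕ :=
  (Finset.univ.filter fun i => β i ≠ 0).sup fun i => min (i : ℕ) r

theorem le_lev (r : ℕ) {β : Fin n → ℤ} (i : Fin n) (hi : β i ≠ 0) : min (i : ℕ) r ≤ lev r β :=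
  Finset.le_sup (f := fun i : Fin n => min (i : ℕ) r) (by simpa using hi)

theorem lev_le (r : ℕ) (β : Fin n → ℤ) : lev r β ≤ r :=
  Finset.sup_le fun _ _ => min_le_right _ _

variable {c} in
theorem exists_coord_lev (r : ℕ) {β : Fin n → ℤ} (hβ : β ∈ c.R) :
    ∃ i, β i ≠ 0 ∧ min (i : ℕ) r = lev r β := by
  obtain ⟨i, hi⟩ := c.exists_coord hβ
  obtain ⟨j, hj, hj2⟩ := Finset.exists_mem_eq_sup (Finset.univ.filter fun i => β i ≠ 0)
    ⟨i, by simpa using hi⟩ (fun i => min (i : ℕ) r)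
  exact ⟨j, by simpa using hj, hj2.symm⟩

theorem suppIn_iff {r k : ℕ} (hk : k ≤ r + 1) {β : Fin n → ℤ} (hβ : β ∈ c.R) :
    suppIn (deltaSet n r k) β ↔ lev r β < k := by
  obtain ⟨i, hi⟩ := c.exists_coord hβ
  constructor
  · intro h
    have key : ∀ j, β j ≠ 0 → min (j : ℕ) r < k := fun j hj => by
      rw [← mem_deltaSet hk]
      by_contra hn
      exact hj (h j hn)
    have hk0 : 0 < k := lt_of_le_of_lt (Nat.zero_le _) (key i hi)
    exact (Finset.sup_lt_iff hk0).2 fun j hj => key j (by simpa using hj)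
  · intro h j hj
    by_contra hn
    exact hj ((mem_deltaSet hk j).2 (lt_of_le_of_lt (le_lev r j hn) h))

theorem deltaSet_mono {r j k : ℕ} (hjk : j ≤ k) (hk : k ≤ r + 1) :
    deltaSet n r j ⊆ deltaSet n r k := by
  intro i
  rw [mem_deltaSet hk, mem_deltaSet (hjk.trans hk)]
  omega

theorem Wsub_mono {S T : Finset (Fin n)} (h : S ⊆ T) : c.Wsub S ≤ c.Wsub T :=
  Subgroup.closure_mono (Set.image_mono (by exact_mod_cast h))

variable {r : ℕ} {w : c.W} {v : Fin (r + 1) → c.W}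

/-- `v_k ⋯ v_1` lies in `W_{Δ_k}`. -/
theorem take_mem (hv : c.IsDecomp r w v) (k : ℕ) (hk : k ≤ r + 1) :
    ((List.ofFn v).take k).reverse.prod ∈ c.Wsub (deltaSet n r k) := by
  apply Subgroup.list_prod_mem
  intro x hx
  rw [List.mem_reverse, List.mem_take_iff_getElem] at hx
  obtain ⟨j, hj, rfl⟩ := hx
  simp only [List.length_ofFn] at hj
  rw [List.getElem_ofFn]
  exact c.Wsub_mono (deltaSet_mono (by simp; omega) hk) (hv.1 ⟨j, by omega⟩).1

/-- `v_{r+1} ⋯ v_{k+1}` preserves positivity on the roots of `Δ_k`. -/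
theorem drop_pos (hv : c.IsDecomp r w v) (d k : ℕ) (hk : k + d = r + 1) {β : Fin n → ℤ}
    (hβ : β ∈ c.R) (hp : Pos β) (hs : suppIn (deltaSet n r k) β) :
    Pos (c.act ((List.ofFn v).drop k).reverse.prod β) := by
  induction d generalizing k β with
  | zero =>
    rw [List.drop_of_length_le (by simp; omega)]
    simpa [c.act_one] using hp
  | succ d ih =>
    have hlt : k < (List.ofFn v).length := by simp; omega
    rw [List.drop_eq_getElem_cons hlt, List.reverse_cons, List.prod_append, c.act_mul,
      List.getElem_ofFn]
    simp only [List.prod_singleton]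
    have hm := hv.1 ⟨k, by omega⟩
    refine ih (k + 1) (by omega) (c.act_mem _ _ hβ) (c.MinRep_pos hm hp hs) ?_
    exact c.Wsub_suppIn (Finset.Subset.refl _) hm.1
      (fun i hi => hs i fun h => hi (deltaSet_mono (Nat.le_succ k) (by omega) h))

open Classical in
/-- The length of the factor `v_{k+1}` is the number of inversions of `w` of level `k`. -/
theorem len_factor (hv : c.IsDecomp r w v) (k : Fin (r + 1)) :
    c.len (v k) = ((c.inv w).filter fun β => lev r β = k).card := by
  have hk : (k : ℕ) < r + 1 := k.2
  set Y := ((List.ofFn v).take k).reverse.prod with hY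
  set V := ((List.ofFn v).drop (k + 1)).reverse.prod with hV
  have hYm : Y ∈ c.Wsub (deltaSet n r k) := c.take_mem hv k (by omega)
  have hw : w = V * v k * Y := by
    have hlt : (k : ℕ) < (List.ofFn v).length := by simp; omega
    have e : List.ofFn v = (List.ofFn v).take k ++ (v k :: (List.ofFn v).drop (k + 1)) := by
      have h1 := (List.take_append_drop (k : ℕ) (List.ofFn v)).symm
      rwa [List.drop_eq_getElem_cons hlt, List.getElem_ofFn] at h1
    rw [hv.2, e, List.reverse_append, List.prod_append, List.reverse_cons, List.prod_append,
      List.prod_singleton]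
  have hm := hv.1 k
  have hVpos : ∀ β ∈ c.R, suppIn (deltaSet n r (k + 1)) β →
      (Pos (c.act V β) ↔ Pos β) := by
    intro β hβ hs
    constructor
    · intro h
      by_contra hn
      rw [c.not_pos_iff hβ] at hn
      have h1 := c.drop_pos hv (r - k) (k + 1) (by omega) (c.neg_mem _ hβ) hn
        (fun i hi => by simp [hs i hi])
      rw [← hV, c.act_neg, ← c.not_pos_iff (c.act_mem _ _ hβ)] at h1
      exact h1 h
    · intro h
      exact c.drop_pos hv (r - k) (k + 1) (by omega) hβ h hs
  have hlev : ∀ β ∈ c.R, (lev r β = k ↔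
      suppIn (deltaSet n r (k + 1)) β ∧ ¬ suppIn (deltaSet n r k) β) := by
    intro β hβ
    rw [c.suppIn_iff (by omega) hβ, c.suppIn_iff (by omega) hβ]
    omega
  -- elements of `W_{Δ_k}` preserve the set of positive roots of level `k`
  have hYpres : ∀ y ∈ c.Wsub (deltaSet n r k), ∀ β ∈ c.R, Pos β → lev r β = k →
      Pos (c.act y β) ∧ lev r (c.act y β) = k := by
    intro y hy β hβ hp hl
    obtain ⟨h1, h2⟩ := (hlev β hβ).1 hl
    refine ⟨c.Wsub_pos hy hβ hp h2, (hlev _ (c.act_mem _ _ hβ)).2 ⟨?_, fun h => h2 ?_⟩⟩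
    · exact c.Wsub_suppIn (deltaSet_mono (Nat.le_succ _) (by omega)) hy h1
    · have := c.Wsub_suppIn (Finset.Subset.refl _) (inv_mem hy) h
      rwa [c.act_inv_act] at this
  rw [c.len_eq]
  symm
  refine Finset.card_nbij' (c.act Y) (c.act Y⁻¹) ?_ ?_ ?_ ?_
  · intro β hβ
    simp only [Finset.coe_filter, Set.mem_ofPred_eq, mem_inv, Finset.mem_coe] at *
    obtain ⟨⟨h1, h2, h3⟩, h4⟩ := hβ
    obtain ⟨h5, h6⟩ := hYpres Y hYm β h1 h2 h4
    have h7 := c.act_mem Y _ h1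
    refine ⟨h7, h5, ?_⟩
    rwa [hw, c.act_mul, c.act_mul, hVpos _ (c.act_mem _ _ h7)
      (c.Wsub_suppIn (Finset.Subset.refl _) hm.1 ((hlev _ h7).1 h6).1)] at h3
  · intro β hβ
    simp only [Finset.coe_filter, Set.mem_ofPred_eq, mem_inv, Finset.mem_coe] at *
    obtain ⟨h1, h2, h3⟩ := hβ
    have h4 : suppIn (deltaSet n r (k + 1)) β := by
      by_contra hn
      exact h3 (c.Wsub_pos hm.1 h1 h2 hn)
    have h4' : lev r β = k := (hlev β h1).2 ⟨h4, fun hn => h3 (c.MinRep_pos hm h2 hn)⟩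
    obtain ⟨h5, h6⟩ := hYpres Y⁻¹ (inv_mem hYm) β h1 h2 h4'
    refine ⟨⟨c.act_mem _ _ h1, h5, ?_⟩, h6⟩
    rwa [hw, c.act_mul, c.act_mul, c.act_act_inv, hVpos _ (c.act_mem _ _ h1)
      (c.Wsub_suppIn (Finset.Subset.refl _) hm.1 h4)]
  · intro β _; exact c.act_inv_act Y β
  · intro β _; exact c.act_act_inv Y β

theorem sum_len (hv : c.IsDecomp r w v) : ∑ k, c.len (v k) = c.len w := by
  classical
  rw [c.len_eq, Finset.card_eq_sum_card_fiberwise (s := c.inv w)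
    (f := fun β => (⟨lev r β, Nat.lt_succ_of_le (lev_le r β)⟩ : Fin (r + 1)))
    (t := Finset.univ) (fun _ _ => Finset.mem_coe.2 (Finset.mem_univ _))]
  refine Finset.sum_congr rfl fun k _ => ?_
  rw [c.len_factor hv]
  congr 1
  ext β
  simp [Fin.ext_iff]

/-! ### Bruhat covers -/

section Cover

variable {u : c.W} {γ : Fin n → ℤ}

open Classical in
/-- `1` if `w` makes `β` negative, `0` otherwise. -/
noncomputable def sgn (w : c.W) (β : Fin n → ℤ) : ℤ := if Pos (c.act w β) then 0 else 1

open Classical in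
/-- The positive roots. -/
noncomputable def posR : Finset (Fin n → ℤ) := c.R.filter Pos

theorem mem_posR {β : Fin n → ℤ} : β ∈ c.posR ↔ β ∈ c.R ∧ Pos β := by
  classical
  simp [posR]

theorem card_inv (w : c.W) : ((c.inv w).card : ℤ) = ∑ β ∈ c.posR, c.sgn w β := by
  classical
  have : c.inv w = c.posR.filter fun β => ¬ Pos (c.act w β) := by
    ext β; simp [mem_inv, mem_posR, and_assoc]
  rw [this, Finset.card_filter]
  push_cast
  refine Finset.sum_congr rfl fun β _ => ?_
  unfold sgn
  split_ifs <;> simp_all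

theorem sgn_neg (w : c.W) {β : Fin n → ℤ} (hβ : β ∈ c.R) : c.sgn w (-β) = 1 - c.sgn w β := by
  have h := c.not_pos_iff (c.act_mem w β hβ)
  unfold sgn
  rw [c.act_neg]
  split_ifs <;> simp_all

theorem sgn_mul (w w' : c.W) (β : Fin n → ℤ) : c.sgn (w * w') β = c.sgn w (c.act w' β) := by
  unfold sgn; rw [c.act_mul]

/-- A positive root made negative by `s_γ` pairs positively with `γ^∨`. -/
theorem pair_pos_of_inv (hγ : γ ∈ c.R) (hγp : Pos γ) {δ : Fin n → ℤ} (hp : Pos δ)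
    (hn : ¬ Pos (c.act (c.σ γ) δ)) : 0 < c.pair δ (c.cor γ) := by
  by_contra h
  push Not at h
  apply hn
  intro i
  rw [c.act_refl_pair hγ]
  have h1 := hp i
  have h2 := mul_nonneg (neg_nonneg.2 h) (hγp i)
  simp only [Pi.sub_apply, Pi.smul_apply, smul_eq_mul]
  linarith

open Classical in
/-- The change of length under right multiplication by `s_γ`, as a sum over the inversions
`δ` of `s_γ`, paired by the involution `δ ↦ -s_γ δ`. -/
theorem len_diff (hγ : γ ∈ c.R) :
    (c.len (u * c.σ γ) : ℤ) - c.len u =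
      ∑ δ ∈ c.posR.filter (fun δ => ¬ Pos (c.act (c.σ γ) δ)),
        (1 - c.sgn u δ - c.sgn u (-c.act (c.σ γ) δ)) := by
  rw [c.len_eq, c.len_eq, c.card_inv, c.card_inv]
  rw [← Finset.sum_filter_add_sum_filter_not c.posR (fun δ => Pos (c.act (c.σ γ) δ))
      (fun β => c.sgn (u * c.σ γ) β),
    ← Finset.sum_filter_add_sum_filter_not c.posR (fun δ => Pos (c.act (c.σ γ) δ))
      (fun β => c.sgn u β)]
  have h1 : ∑ β ∈ c.posR.filter (fun δ => Pos (c.act (c.σ γ) δ)), c.sgn (u * c.σ γ) β =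
      ∑ β ∈ c.posR.filter (fun δ => Pos (c.act (c.σ γ) δ)), c.sgn u β := by
    have hmem : ∀ β ∈ c.posR.filter (fun δ => Pos (c.act (c.σ γ) δ)),
        c.act (c.σ γ) β ∈ c.posR.filter (fun δ => Pos (c.act (c.σ γ) δ)) := by
      intro β hβ
      simp only [Finset.mem_filter, mem_posR] at *
      exact ⟨⟨c.act_mem _ _ hβ.1.1, hβ.2⟩, by rw [c.refl_refl hγ]; exact hβ.1.2⟩
    exact Finset.sum_nbij' (c.act (c.σ γ)) (c.act (c.σ γ)) hmem hmem
      (fun β _ => c.refl_refl hγ β) (fun β _ => c.refl_refl hγ β) (fun β _ => c.sgn_mul _ _ _)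
  rw [h1, add_sub_add_left_eq_sub, ← Finset.sum_sub_distrib]
  refine Finset.sum_congr rfl fun δ hδ => ?_
  simp only [Finset.mem_filter, mem_posR] at hδ
  rw [c.sgn_neg u (c.act_mem _ _ hδ.1.1), c.sgn_mul]
  have : ∀ a b : ℤ, a - b = 1 - b - (1 - a) := by intros; ring
  exact this _ _

/-- The sum of the two roots `δ` and `-s_γ δ` is a multiple of `γ`, also after applying `u`. -/
theorem act_add_act (hγ : γ ∈ c.R) (δ : Fin n → ℤ) :
    c.act u δ + c.act u (-c.act (c.σ γ) δ) = c.pair δ (c.cor γ) • c.act u γ := by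
  rw [← (c.act_linear u).1, ← (c.act_linear u).2, c.act_refl_pair hγ]
  congr 1
  abel

theorem act_pos_of_len (hγ : γ ∈ c.R) (hγp : Pos γ)
    (hlen : c.len (u * c.σ γ) = c.len u + 1) : Pos (c.act u γ) := by
  classical
  by_contra hn
  have h := c.len_diff (u := u) hγ
  have hle := Finset.sum_nonpos (s := c.posR.filter (fun δ => ¬ Pos (c.act (c.σ γ) δ)))
    (f := fun δ => 1 - c.sgn u δ - c.sgn u (-c.act (c.σ γ) δ)) (by
      intro δ hδ
      simp only [Finset.mem_filter, mem_posR] at hδ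
      have hk := c.pair_pos_of_inv hγ hγp hδ.1.2 hδ.2
      have he := c.act_add_act (u := u) hγ δ
      have : ¬ (Pos (c.act u δ) ∧ Pos (c.act u (-c.act (c.σ γ) δ))) := by
        rintro ⟨h1, h2⟩
        apply hn
        intro i
        have e := congrFun he i
        simp only [Pi.add_apply, Pi.smul_apply, smul_eq_mul] at e
        have := h1 i
        have := h2 i
        by_contra hneg
        push Not at hneg
        have := mul_neg_of_pos_of_neg hk hneg
        omega
      clear h
      unfold sgn
      split_ifs <;> simp_all)
  rw [← h, hlen] at hle
  push_cast at hle
  omega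

/-- For a cover `u < u s_γ` and an inversion `δ ≠ γ` of `s_γ`, exactly one of `δ` and
`-s_γ δ` is an inversion of `u`; hence `s_γ` does not change whether `δ` is an inversion. -/
theorem sgn_cover (hγ : γ ∈ c.R) (hγp : Pos γ)
    (hlen : c.len (u * c.σ γ) = c.len u + 1) {δ : Fin n → ℤ} (hδ : δ ∈ c.R) (hp : Pos δ)
    (hn : ¬ Pos (c.act (c.σ γ) δ)) (hne : δ ≠ γ) :
    c.sgn (u * c.σ γ) δ = c.sgn u δ := by
  classical
  have hu := c.act_pos_of_len hγ hγp hlen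
  have h := c.len_diff (u := u) hγ
  have hnonneg : ∀ δ ∈ c.posR.filter (fun δ => ¬ Pos (c.act (c.σ γ) δ)),
      0 ≤ 1 - c.sgn u δ - c.sgn u (-c.act (c.σ γ) δ) := by
    intro δ hδ
    simp only [Finset.mem_filter, mem_posR] at hδ
    have hk := c.pair_pos_of_inv hγ hγp hδ.1.2 hδ.2
    have he := c.act_add_act (u := u) hγ δ
    have : ¬ (¬ Pos (c.act u δ) ∧ ¬ Pos (c.act u (-c.act (c.σ γ) δ))) := by
      rintro ⟨h1, h2⟩
      rw [c.not_pos_iff (c.act_mem _ _ hδ.1.1)] at h1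
      rw [c.not_pos_iff (c.act_mem _ _ (c.neg_mem _ (c.act_mem _ _ hδ.1.1)))] at h2
      have : ¬ Pos (c.act u γ) := by
        rw [c.not_pos_iff (c.act_mem _ _ hγ)]
        intro i
        have e := congrFun he i
        simp only [Pi.add_apply, Pi.smul_apply, smul_eq_mul] at e
        have h1i := h1 i
        have h2i := h2 i
        simp only [Pi.neg_apply] at h1i h2i ⊢
        by_contra hneg
        have := mul_pos hk (show 0 < c.act u γ i by omega)
        omega
      exact this hu
    clear h
    unfold sgn
    split_ifs <;> simp_all
  have hγmem : γ ∈ c.posR.filter (fun δ => ¬ Pos (c.act (c.σ γ) δ)) := by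
    simp only [Finset.mem_filter, mem_posR]
    refine ⟨⟨hγ, hγp⟩, ?_⟩
    rw [c.refl_self hγ, c.not_pos_iff (c.neg_mem _ hγ), neg_neg]
    exact hγp
  -- the term of `γ` already accounts for the increase of the length by one
  rw [← Finset.add_sum_erase _ _ hγmem, c.refl_self hγ, neg_neg, hlen] at h
  have hγ0 : c.sgn u γ = 0 := by simp [sgn, hu]
  rw [hγ0] at h
  push_cast at h
  have hz := (Finset.sum_eq_zero_iff_of_nonneg
    (fun δ hδ => hnonneg δ (Finset.mem_of_mem_erase hδ))).1
    (show ∑ δ ∈ (c.posR.filter (fun δ => ¬ Pos (c.act (c.σ γ) δ))).erase γ,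
      (1 - c.sgn u δ - c.sgn u (-c.act (c.σ γ) δ)) = 0 by linarith) δ
    (Finset.mem_erase.2 ⟨hne, by
      simp only [Finset.mem_filter, mem_posR]; exact ⟨⟨hδ, hp⟩, hn⟩⟩)
  rw [c.sgn_neg u (c.act_mem _ _ hδ)] at hz
  rw [c.sgn_mul]
  linarith

/-- Below the level of `γ`, passing from `u` to the cover `u s_γ` creates no inversion. -/
theorem inv_cover_subset (r : ℕ) (hγ : γ ∈ c.R) (hγp : Pos γ)
    (hlen : c.len (u * c.σ γ) = c.len u + 1) {δ : Fin n → ℤ} (hδ : δ ∈ c.inv (u * c.σ γ))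
    (hlev : lev r δ < lev r γ) : δ ∈ c.inv u := by
  obtain ⟨h1, h2, h3⟩ := c.mem_inv.1 hδ
  refine c.mem_inv.2 ⟨h1, h2, ?_⟩
  by_cases hp : Pos (c.act (c.σ γ) δ)
  · intro hu
    have huγ := c.act_pos_of_len hγ hγp hlen
    have hk : 0 < c.pair δ (c.cor γ) := by
      by_contra hk
      push Not at hk
      apply h3
      intro i
      have e := congrFun (c.act_add_act (u := u) hγ δ) i
      rw [c.act_neg] at e
      simp only [Pi.add_apply, Pi.neg_apply, Pi.smul_apply, smul_eq_mul] at e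
      have e1 := mul_nonneg (neg_nonneg.2 hk) (huγ i)
      have e2 := hu i
      rw [c.act_mul]
      linarith
    -- `γ` has a coordinate outside the support of `δ`, which becomes negative in `s_γ δ`
    obtain ⟨i, hi, hi2⟩ := exists_coord_lev r hγ
    have hδi : δ i = 0 := by
      by_contra hne
      have := le_lev r i hne
      omega
    have e := hp i
    rw [c.act_refl_pair hγ] at e
    simp only [Pi.sub_apply, Pi.smul_apply, smul_eq_mul, hδi] at e
    have e3 := hγp i
    have := mul_pos hk (show 0 < γ i by omega)
    omega
  · have hne : δ ≠ γ := by rintro rfl; exact lt_irrefl _ hlev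
    have e := c.sgn_cover hγ hγp hlen h1 h2 hp hne
    intro hu
    simp [sgn, hu, h3] at e

/-- Above the level of `γ`, the reflection `s_γ` preserves positivity and levels. -/
theorem refl_above (r : ℕ) (hγ : γ ∈ c.R) {δ : Fin n → ℤ} (hδ : δ ∈ c.R) (hp : Pos δ)
    (hlev : lev r γ < lev r δ) :
    Pos (c.act (c.σ γ) δ) ∧ lev r (c.act (c.σ γ) δ) = lev r δ := by
  obtain ⟨i, hi, hi2⟩ := exists_coord_lev r hδ
  have hγi : γ i = 0 := by
    by_contra hne
    have := le_lev r i hne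
    omega
  have hsi : c.act (c.σ γ) δ i = δ i := by
    rw [c.act_refl_pair hγ]; simp [hγi]
  refine ⟨c.pos_of_coord (c.act_mem _ _ hδ) i ?_, le_antisymm (Finset.sup_le ?_) ?_⟩
  · rw [hsi]
    have := hp i
    omega
  · intro j hj
    have hj0 : c.act (c.σ γ) δ j ≠ 0 := by simpa using hj
    by_cases h1 : δ j = 0
    · have h2 : γ j ≠ 0 := by
        intro h2
        apply hj0
        rw [c.act_refl_pair hγ]
        simp [h1, h2]
      have := le_lev r j h2
      omega
    · exact le_lev r j h1
  · rw [← hi2]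
    exact le_lev r i (by rw [hsi]; exact hi)

open Classical in
theorem card_above (r : ℕ) (hγ : γ ∈ c.R) (k : ℕ) (hk : lev r γ < k) :
    ((c.inv (u * c.σ γ)).filter fun β => lev r β = k).card =
      ((c.inv u).filter fun β => lev r β = k).card := by
  refine Finset.card_nbij' (c.act (c.σ γ)) (c.act (c.σ γ)) ?_ ?_ ?_ ?_
  · intro β hβ
    simp only [Finset.coe_filter, Set.mem_ofPred_eq, mem_inv] at *
    obtain ⟨⟨h1, h2, h3⟩, h4⟩ := hβ
    obtain ⟨h5, h6⟩ := c.refl_above r hγ h1 h2 (by omega)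
    exact ⟨⟨c.act_mem _ _ h1, h5, by rwa [← c.act_mul]⟩, by omega⟩
  · intro β hβ
    simp only [Finset.coe_filter, Set.mem_ofPred_eq, mem_inv] at *
    obtain ⟨⟨h1, h2, h3⟩, h4⟩ := hβ
    obtain ⟨h5, h6⟩ := c.refl_above r hγ h1 h2 (by omega)
    exact ⟨⟨c.act_mem _ _ h1, h5, by rwa [c.act_mul, c.refl_refl hγ]⟩, by omega⟩
  · intro β _; exact c.refl_refl hγ β
  · intro β _; exact c.refl_refl hγ β

end Cover

end RootSystemData

/-- **Key Lemma, part (a).**  Let `u ∈ W` and `γ ∈ R^+` with `ℓ(u s_γ) = ℓ(u) + 1`.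
Then for every `i` with `⟨χ_i, γ^∨⟩ ≠ 0`, `gr(u s_γ) ≤ gr(u) + e_m` in the
lexicographic order on `ℤ^{r+1}`, where `m` is the unique index with
`α_i ∈ Δ_m \ Δ_{m-1}` (i.e. the `0`-based grading coordinate `min i r`). -/
theorem key_lemma_a {n : ℕ} (c : RootSystemData n)
    (r : ℕ) (hr1 : 1 ≤ r) (hrn : r < n) (hA : c.PathA r)
    (u : c.W) (γ : Fin n → ℤ) (hγR : γ ∈ c.R) (hγpos : ∀ i, 0 ≤ γ i)
    (hlen : c.len (u * c.σ γ) = c.len u + 1)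
    (i : Fin n) (hi : c.cor γ i ≠ 0)
    (v v' : Fin (r + 1) → c.W)
    (hv : c.IsDecomp r u v) (hv' : c.IsDecomp r (u * c.σ γ) v') :
    lexLE (fun k => (c.len (v' k) : ℤ))
      (fun k => (c.len (v k) : ℤ) + if (k : ℕ) = min (i : ℕ) r then 1 else 0) := by
  classical
  set p := RootSystemData.lev r γ with hp
  have hpr : p ≤ r := RootSystemData.lev_le r γ
  have hmp : min (i : ℕ) r ≤ p :=
    RootSystemData.le_lev r i (c.coord_ne_of_cor hγR hγpos i hi)
  have hbelow : ∀ k : Fin (r + 1), (k : ℕ) < p → c.len (v' k) ≤ c.len (v k) := by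
    intro k hk
    rw [c.len_factor hv, c.len_factor hv']
    refine Finset.card_le_card fun δ hδ => ?_
    rw [Finset.mem_filter] at hδ ⊢
    exact ⟨c.inv_cover_subset r hγR hγpos hlen hδ.1 (by omega), hδ.2⟩
  have habove : ∀ k : Fin (r + 1), p < (k : ℕ) → c.len (v' k) = c.len (v k) := by
    intro k hk
    rw [c.len_factor hv, c.len_factor hv']
    exact c.card_above r hγR k hk
  have htot : ∑ k, c.len (v' k) = ∑ k, c.len (v k) + 1 := by
    rw [c.sum_len hv, c.sum_len hv', hlen]
  let P : Fin (r + 1) := ⟨p, by omega⟩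
  have hat : (∀ k : Fin (r + 1), (k : ℕ) < p → c.len (v' k) = c.len (v k)) →
      c.len (v' P) = c.len (v P) + 1 := by
    intro hall
    rw [← Finset.add_sum_erase _ _ (Finset.mem_univ P),
      ← Finset.add_sum_erase _ (fun k => c.len (v k)) (Finset.mem_univ P)] at htot
    have : ∑ k ∈ Finset.univ.erase P, c.len (v' k) = ∑ k ∈ Finset.univ.erase P, c.len (v k) := by
      refine Finset.sum_congr rfl fun k hk => ?_
      have hne : (k : ℕ) ≠ p := fun h => (Finset.mem_erase.1 hk).1 (Fin.ext h)
      rcases lt_or_gt_of_ne hne with h | h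
      · exact hall k h
      · exact habove k h
    omega
  by_cases heq : ∀ k : Fin (r + 1), (c.len (v' k) : ℤ) =
      c.len (v k) + if (k : ℕ) = min (i : ℕ) r then 1 else 0
  · exact Or.inl (funext heq)
  push Not at heq
  -- compare the two sides at the first index where they differ
  obtain ⟨j, hj, hmin⟩ := WellFounded.has_min (wellFounded_lt (α := Fin (r + 1)))
    {k | (c.len (v' k) : ℤ) ≠ c.len (v k) + if (k : ℕ) = min (i : ℕ) r then 1 else 0} heq
  have hpre : ∀ k, k < j → (c.len (v' k) : ℤ) =
      c.len (v k) + if (k : ℕ) = min (i : ℕ) r then 1 else 0 := by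
    intro k hk
    by_contra hne
    exact hmin k hne hk
  refine Or.inr ⟨j, lt_of_le_of_ne ?_ hj, hpre⟩
  by_cases hjp : (j : ℕ) < p
  · have := hbelow j hjp
    dsimp only
    split_ifs <;> omega
  · exfalso
    have hlow : ∀ k : Fin (r + 1), (k : ℕ) < p →
        c.len (v' k) = c.len (v k) ∧ (k : ℕ) ≠ min (i : ℕ) r := by
      intro k hk
      have h1 := hpre k (Fin.lt_def.2 (by omega))
      have h2 := hbelow k hk
      split_ifs at h1 with h3 <;> omega
    have hm : min (i : ℕ) r = p := by
      by_contra hne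
      exact (hlow ⟨min (i : ℕ) r, by omega⟩ (by simp only; omega)).2 rfl
    apply hj
    rcases Nat.lt_or_ge p j with h | h
    · rw [habove j h, if_neg (by omega)]; simp
    · have hjP : j = P := Fin.ext (by simp only [P]; omega)
      rw [hjP, hat fun k hk => (hlow k hk).1, if_pos (by simp only [P]; omega)]
      push_cast
      ring
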